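/- arXiv:1212.3462 — 2 statements merged into one kernel-verified Lean document; each statement's English description precedes it below -/
import Mathlib

section
/- For all f, g in the algebra 𝒜, ω(f ⋆ g*) = ∫ f(x) \overline{g}(x) d²x, where g* is the deformed involution; in particular the sesquilinear form (f,g) ↦ ω(f* ⋆ g) is a positive-definite inner product on 𝒜. -/
open MeasureTheory Complex

/-- Fourier transform in the first variable:
(𝓕₀f)(p₀, x₁) = ∫ e^{-ip₀y₀} f(y₀, x₁) dy₀. -/
noncomputable def F0 (f : ℝ × ℝ → ℂ) : ℝ × ℝ → ℂ :=
  fun p => ∫ y0 : ℝ, Complex.exp (-Complex.I * (p.1 : ℂ) * (y0 : ℂ)) * f (y0, p.2)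

/-- The deformed (star) product of κ-Minkowski:
(f ⋆ g)(x) = (2π)⁻¹ ∫ e^{ip₀x₀} (𝓕₀f)(p₀,x₁) g(x₀, e^{-λp₀}x₁) dp₀. -/
noncomputable def sprod (lam : ℝ) (f g : ℝ × ℝ → ℂ) : ℝ × ℝ → ℂ :=
  fun x => (2 * Real.pi)⁻¹ • ∫ p0 : ℝ,
    Complex.exp (Complex.I * (p0 : ℂ) * (x.1 : ℂ)) * F0 f (p0, x.2)
      * g (x.1, Real.exp (-lam * p0) * x.2)

/-- The deformed involution:
f*(x) = (2π)⁻¹ ∫ e^{ip₀x₀} (𝓕₀ conj f)(p₀, e^{-λp₀}x₁) dp₀. -/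
noncomputable def sinv (lam : ℝ) (f : ℝ × ℝ → ℂ) : ℝ × ℝ → ℂ :=
  fun x => (2 * Real.pi)⁻¹ • ∫ p0 : ℝ,
    Complex.exp (Complex.I * (p0 : ℂ) * (x.1 : ℂ))
      * F0 (fun y => (starRingEnd ℂ) (f y)) (p0, Real.exp (-lam * p0) * x.2)

/-- Membership in the algebra 𝒜 = 𝓕(𝒮_c): f is the Fourier transform of a
Schwartz function with compact support in the first variable. -/
def InA (f : ℝ × ℝ → ℂ) : Prop :=
  ∃ h : SchwartzMap (ℝ × ℝ) ℂ,
    (∃ R : ℝ, ∀ p : ℝ × ℝ, R < |p.1| → h p = 0) ∧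
    ∀ x : ℝ × ℝ, f x = (2 * Real.pi)⁻¹ • ∫ p : ℝ × ℝ,
      Complex.exp (Complex.I * ((p.1 : ℂ) * (x.1 : ℂ) + (p.2 : ℂ) * (x.2 : ℂ))) * h p

/-- The invariant weight ω(f) = ∫ f(x) d²x. -/
noncomputable def omegaW (f : ℝ × ℝ → ℂ) : ℂ := ∫ x : ℝ × ℝ, f x

open scoped FourierTransform ContDiff

/-- The integrable weight `(1 + x₀²)⁻¹ (1 + x₁²)⁻¹` on the plane. -/
noncomputable def planeWeight (x : ℝ × ℝ) : ℝ := (1 + x.1 ^ 2)⁻¹ * (1 + x.2 ^ 2)⁻¹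

theorem planeWeight_nonneg (x : ℝ × ℝ) : 0 ≤ planeWeight x := by
  unfold planeWeight; positivity

theorem inv_one_add_sq_le_one (t : ℝ) : (1 + t ^ 2)⁻¹ ≤ 1 :=
  inv_le_one_of_one_le₀ (by nlinarith [sq_nonneg t])

theorem integrable_planeWeight : Integrable planeWeight :=
  integrable_inv_one_add_sq.mul_prod integrable_inv_one_add_sq

theorem SchwartzMap.exists_norm_le_planeWeight (h : SchwartzMap (ℝ × ℝ) ℂ) :
    ∃ C, 0 ≤ C ∧ ∀ x, ‖h x‖ ≤ C * planeWeight x := by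
  refine ⟨2 ^ 4 * (Finset.Iic ((4, 0) : ℕ × ℕ)).sup
    (fun m => SchwartzMap.seminorm ℝ m.1 m.2) h, by positivity, fun x => ?_⟩
  have hb := SchwartzMap.one_add_le_sup_seminorm_apply (𝕜 := ℝ) (m := (4, 0)) (k := 4) (n := 0)
    le_rfl le_rfl h x
  rw [norm_iteratedFDeriv_zero] at hb
  have h1 : |x.1| ≤ ‖x‖ := norm_fst_le x
  have h2 : |x.2| ≤ ‖x‖ := norm_snd_le x
  have hn := norm_nonneg x
  have key : ∀ t : ℝ, |t| ≤ ‖x‖ → 1 + t ^ 2 ≤ (1 + ‖x‖) ^ 2 := fun t ht => by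
    rw [← sq_abs t]; nlinarith [abs_nonneg t]
  have hle : (1 + x.1 ^ 2) * (1 + x.2 ^ 2) ≤ (1 + ‖x‖) ^ 4 := by
    calc _ ≤ (1 + ‖x‖) ^ 2 * (1 + ‖x‖) ^ 2 := by
          gcongr
          · exact key _ h1
          · exact key _ h2
      _ = _ := by ring
  unfold planeWeight
  rw [← mul_inv, ← div_eq_mul_inv, le_div_iff₀ (by positivity), mul_comm]
  exact (mul_le_mul_of_nonneg_right hle (norm_nonneg _)).trans hb

/-- The normalised inverse Fourier transform of a function on the plane. -/
noncomputable def synthesis (h : ℝ × ℝ → ℂ) (x : ℝ × ℝ) : ℂ :=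
  (2 * Real.pi)⁻¹ • ∫ p : ℝ × ℝ,
    Complex.exp (Complex.I * ((p.1 : ℂ) * (x.1 : ℂ) + (p.2 : ℂ) * (x.2 : ℂ))) * h p

/-- The unnormalised inverse Fourier transform in the second variable. -/
noncomputable def partialInv (h : ℝ × ℝ → ℂ) (x : ℝ × ℝ) : ℂ :=
  ∫ q : ℝ, Complex.exp (Complex.I * (q : ℂ) * (x.2 : ℂ)) * h (x.1, q)

theorem synthesis_eq_schwartz (h : SchwartzMap (ℝ × ℝ) ℂ) :
    ∃ f : SchwartzMap (ℝ × ℝ) ℂ, ∀ x, synthesis h x = f x := by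
  let e := WithLp.prodContinuousLinearEquiv 2 ℝ ℝ ℝ
  let h' : SchwartzMap (WithLp 2 (ℝ × ℝ)) ℂ :=
    SchwartzMap.compCLMOfContinuousLinearEquiv ℝ e h
  have hpi : (2 * Real.pi)⁻¹ ≠ 0 := by positivity
  let d : (ℝ × ℝ) ≃L[ℝ] WithLp 2 (ℝ × ℝ) :=
    (ContinuousLinearEquiv.smulLeft (Units.mk0 _ hpi) : (ℝ × ℝ) ≃L[ℝ] (ℝ × ℝ)).trans e.symm
  refine ⟨(2 * Real.pi)⁻¹ • SchwartzMap.compCLMOfContinuousLinearEquiv ℝ d (𝓕⁻ h'), fun x => ?_⟩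
  simp only [smul_apply, SchwartzMap.compCLMOfContinuousLinearEquiv_apply,
    Function.comp_apply, SchwartzMap.fourierInv_coe, Real.fourierInv_eq', synthesis]
  congr 1
  rw [← (WithLp.volume_preserving_toLp ℝ ℝ).integral_comp
    (MeasurableEquiv.toLp 2 (ℝ × ℝ)).measurableEmbedding]
  refine integral_congr_ae (.of_forall fun p => ?_)
  have hd : d x = WithLp.toLp 2 ((2 * Real.pi)⁻¹ * x.1, (2 * Real.pi)⁻¹ * x.2) := rfl
  have hh : h' (WithLp.toLp 2 p) = h p := rfl
  simp only [hd, hh, WithLp.prod_inner_apply, smul_eq_mul]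
  congr 2
  simp
  have : (Real.pi : ℂ) ≠ 0 := by exact_mod_cast Real.pi_ne_zero
  field_simp

theorem continuous_synthesis (h : SchwartzMap (ℝ × ℝ) ℂ) : Continuous (synthesis h) := by
  obtain ⟨f, hf⟩ := synthesis_eq_schwartz h
  rw [funext hf]
  exact f.continuous

theorem exists_norm_synthesis_le (h : SchwartzMap (ℝ × ℝ) ℂ) :
    ∃ C, 0 ≤ C ∧ ∀ x, ‖synthesis h x‖ ≤ C * planeWeight x := by
  obtain ⟨f, hf⟩ := synthesis_eq_schwartz h
  simpa only [hf] using f.exists_norm_le_planeWeight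

theorem norm_exp_I_mul (t : ℝ) (z : ℂ) : ‖Complex.exp (Complex.I * t) * z‖ = ‖z‖ := by
  rw [norm_mul, Complex.norm_exp_I_mul_ofReal, one_mul]

theorem norm_exp_I_mul_mul (s t : ℝ) (z : ℂ) : ‖Complex.exp (Complex.I * s * t) * z‖ = ‖z‖ := by
  rw [mul_assoc, ← Complex.ofReal_mul, norm_exp_I_mul]

theorem synthesis_eq_integral_partialInv (h : SchwartzMap (ℝ × ℝ) ℂ) (x : ℝ × ℝ) :
    synthesis h x = (2 * Real.pi)⁻¹ • ∫ p : ℝ,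
      Complex.exp (Complex.I * (p : ℂ) * (x.1 : ℂ)) * partialInv h (p, x.2) := by
  unfold synthesis partialInv
  rw [Measure.volume_eq_prod, integral_prod]
  · congr 2 with p
    rw [← integral_const_mul]
    congr 1 with q
    rw [← mul_assoc, ← Complex.exp_add]
    congr 2
    ring
  · refine h.integrable.norm.mono' ?_ (.of_forall fun p => ?_)
    · have := h.continuous
      exact Continuous.aestronglyMeasurable (by fun_prop)
    · apply le_of_eq
      rw [← Complex.ofReal_mul, ← Complex.ofReal_mul, ← Complex.ofReal_add, norm_exp_I_mul]

theorem continuous_partialInv (h : SchwartzMap (ℝ × ℝ) ℂ) : Continuous (partialInv h) := by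
  obtain ⟨C, hC, hb⟩ := h.exists_norm_le_planeWeight
  have hc := h.continuous
  refine continuous_of_dominated (bound := fun q => C * (1 + q ^ 2)⁻¹)
    (fun x => Continuous.aestronglyMeasurable (by fun_prop)) (fun x => .of_forall fun q => ?_)
    (integrable_inv_one_add_sq.const_mul C) (.of_forall fun q => by fun_prop)
  rw [norm_exp_I_mul_mul]
  refine (hb _).trans (mul_le_mul_of_nonneg_left ?_ hC)
  exact mul_le_of_le_one_left (by positivity) (inv_one_add_sq_le_one _)

theorem exists_norm_partialInv_le_fst (h : SchwartzMap (ℝ × ℝ) ℂ) :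
    ∃ C, ∀ x, ‖partialInv h x‖ ≤ C * (1 + x.1 ^ 2)⁻¹ := by
  obtain ⟨C, hC, hb⟩ := h.exists_norm_le_planeWeight
  refine ⟨C * ∫ q : ℝ, (1 + q ^ 2)⁻¹, fun x => ?_⟩
  have := norm_integral_le_of_norm_le (μ := volume)
    (f := fun q : ℝ => Complex.exp (Complex.I * (q : ℂ) * (x.2 : ℂ)) * h (x.1, q))
    (integrable_inv_one_add_sq.const_mul (C * (1 + x.1 ^ 2)⁻¹)) (.of_forall fun q => by
      rw [norm_exp_I_mul_mul]
      exact (hb _).trans_eq (by simp only [planeWeight]; ring))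
  rw [integral_const_mul] at this
  exact this.trans_eq (by ring)

theorem integrable_of_norm_le_inv_one_add_sq {u : ℝ → ℂ} (hu : Continuous u) {C : ℝ}
    (hb : ∀ t, ‖u t‖ ≤ C * (1 + t ^ 2)⁻¹) : Integrable u :=
  (integrable_inv_one_add_sq.const_mul C).mono' hu.aestronglyMeasurable (.of_forall hb)

/-- Fourier inversion on the line, in the angular frequency convention. -/
theorem integral_exp_mul_inverse_fourier {u v : ℝ → ℂ} (hu : Continuous u) (hui : Integrable u)
    (hv : ∀ y, v y = (2 * Real.pi)⁻¹ • ∫ q : ℝ, Complex.exp (Complex.I * (q : ℂ) * (y : ℂ)) * u q)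
    (hvi : Integrable v) (p : ℝ) :
    ∫ y : ℝ, Complex.exp (-Complex.I * (p : ℂ) * (y : ℂ)) * v y = u p := by
  have hpi : (2 * Real.pi) ≠ 0 := by positivity
  have hinv : 𝓕⁻ u = fun w => (2 * Real.pi) • v (2 * Real.pi * w) := by
    funext w
    rw [Real.fourierInv_eq', hv, smul_smul, mul_inv_cancel₀ hpi, one_smul]
    congr 1 with q
    rw [smul_eq_mul]
    congr 2
    simp
    ring
  have hfor : Integrable (𝓕 u) := by
    have : 𝓕 u = fun w => (2 * Real.pi) • v ((-(2 * Real.pi)) * w) := by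
      funext w
      have h1 := Real.fourierInv_eq_fourier_neg u (-w)
      rw [neg_neg] at h1
      rw [← h1, hinv]
      simp
    rw [this]
    exact (hvi.comp_mul_left' (neg_ne_zero.2 hpi)).smul (2 * Real.pi)
  have h2 := congrFun (hu.fourier_fourierInv_eq hui hfor) p
  rw [← h2, Real.fourier_eq', hinv]
  have h3 := Measure.integral_comp_mul_left
    (fun y : ℝ => Complex.exp (-Complex.I * (p : ℂ) * (y : ℂ)) * v y) (2 * Real.pi)
  rw [abs_of_pos (by positivity), eq_inv_smul_iff₀ hpi] at h3
  rw [← h3, ← integral_smul]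
  congr 1 with w
  rw [smul_eq_mul, mul_smul_comm]
  congr 3
  simp
  ring

theorem F0_synthesis (h : SchwartzMap (ℝ × ℝ) ℂ) : F0 (synthesis h) = partialInv h := by
  funext ⟨p, y⟩
  have hc := continuous_partialInv h
  have hs := continuous_synthesis h
  obtain ⟨C, hC⟩ := exists_norm_partialInv_le_fst h
  obtain ⟨D, hD0, hD⟩ := exists_norm_synthesis_le h
  refine integral_exp_mul_inverse_fourier (u := fun q => partialInv h (q, y))
    (v := fun t => synthesis h (t, y)) (by fun_prop)
    (integrable_of_norm_le_inv_one_add_sq (by fun_prop) fun t => hC (t, y))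
    (fun t => synthesis_eq_integral_partialInv h (t, y))
    (integrable_of_norm_le_inv_one_add_sq (C := D) (by fun_prop) fun t => ?_) p
  refine (hD _).trans (mul_le_mul_of_nonneg_left ?_ hD0)
  exact mul_le_of_le_one_right (by positivity) (inv_one_add_sq_le_one _)

theorem exists_norm_partialInv_le_snd (h : SchwartzMap (ℝ × ℝ) ℂ) :
    ∃ C, 0 ≤ C ∧ ∀ x, ‖partialInv h x‖ ≤ C * (1 + x.2 ^ 2)⁻¹ := by
  obtain ⟨D, hD0, hD⟩ := exists_norm_synthesis_le h
  refine ⟨D * ∫ q : ℝ, (1 + q ^ 2)⁻¹, mul_nonneg hD0 (integral_nonneg fun q => by positivity),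
    fun x => ?_⟩
  rw [← F0_synthesis]
  have := norm_integral_le_of_norm_le (μ := volume)
    (f := fun t : ℝ => Complex.exp (-Complex.I * (x.1 : ℂ) * (t : ℂ)) * synthesis h (t, x.2))
    (integrable_inv_one_add_sq.const_mul (D * (1 + x.2 ^ 2)⁻¹)) (.of_forall fun t => by
      have := norm_exp_I_mul_mul (-x.1) t (synthesis h (t, x.2))
      rw [Complex.ofReal_neg, mul_neg, ← neg_mul] at this
      rw [this]
      exact (hD _).trans_eq (by simp only [planeWeight]; ring))
  rw [integral_const_mul] at this
  exact this.trans_eq (by ring)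

theorem F0_conj (f : ℝ × ℝ → ℂ) (p y : ℝ) :
    F0 (fun x => (starRingEnd ℂ) (f x)) (p, y) = (starRingEnd ℂ) (F0 f (-p, y)) := by
  unfold F0
  rw [← integral_conj]
  congr 1 with t
  rw [map_mul, ← Complex.exp_conj]
  simp

/-- The deformed involution in momentum space. -/
theorem exists_schwartz_involution (lam : ℝ) (h : SchwartzMap (ℝ × ℝ) ℂ) {R : ℝ}
    (hR : ∀ p : ℝ × ℝ, R < |p.1| → h p = 0) :
    ∃ k : SchwartzMap (ℝ × ℝ) ℂ, ∀ p : ℝ × ℝ,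
      k p = Real.exp (lam * p.1) * (starRingEnd ℂ) (h (-p.1, -(Real.exp (lam * p.1) * p.2))) := by
  let b : ContDiffBump (0 : ℝ) := ⟨|R| + 1, |R| + 2, by positivity, by linarith⟩
  have hb_one : ∀ t, |t| ≤ R → b t = 1 := fun t ht =>
    b.one_of_mem_closedBall (by
      simp only [Metric.mem_closedBall, dist_zero_right, Real.norm_eq_abs, b]
      linarith [le_abs_self R])
  let E : ℝ → ℝ := fun t => Real.exp (lam * (b t * t))
  have hE : E.HasTemperateGrowth := by
    have hsmooth : ContDiff ℝ ∞ fun t => E t - 1 := by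
      have hb : ContDiff ℝ ∞ b := b.contDiff
      exact (Real.contDiff_exp.comp (contDiff_const.mul (hb.mul contDiff_id))).sub contDiff_const
    have hsupp : HasCompactSupport fun t => E t - 1 := by
      refine b.hasCompactSupport.mono fun t ht => ?_
      contrapose! ht
      simp only [Function.mem_support, not_not] at ht
      simp [E, ht]
    have := (hsupp.hasTemperateGrowth hsmooth).add (Function.HasTemperateGrowth.const (1 : ℝ))
    convert this using 1
    ext t
    simp
  have hE1 : (fun p : ℝ × ℝ => E p.1).HasTemperateGrowth :=
    hE.comp (ContinuousLinearMap.fst ℝ ℝ ℝ).hasTemperateGrowth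
  have h2 : (fun p : ℝ × ℝ => p.2).HasTemperateGrowth :=
    (ContinuousLinearMap.snd ℝ ℝ ℝ).hasTemperateGrowth
  let γ : ℝ × ℝ → ℝ × ℝ := fun p => (-p.1, -(E p.1 * p.2))
  have hγ : γ.HasTemperateGrowth := by
    have e1 := (-ContinuousLinearMap.inl ℝ ℝ ℝ ∘L ContinuousLinearMap.fst ℝ ℝ ℝ).hasTemperateGrowth
    have e2 := (-ContinuousLinearMap.inr ℝ ℝ ℝ).hasTemperateGrowth.comp (hE1.mul h2)
    convert e1.add e2 using 1
    ext p <;> simp [γ]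
  obtain ⟨M, hM⟩ : ∃ M, ∀ t, (E t)⁻¹ ≤ M := by
    have hc : Continuous fun t => (E t)⁻¹ - 1 := by
      have := b.continuous
      have hne : ∀ t, E t ≠ 0 := fun t => (Real.exp_pos _).ne'
      have hEc : Continuous E := by fun_prop
      exact (hEc.inv₀ hne).sub continuous_const
    have hsupp : HasCompactSupport fun t => (E t)⁻¹ - 1 := by
      refine b.hasCompactSupport.mono fun t ht => ?_
      contrapose! ht
      simp only [Function.mem_support, not_not] at ht
      simp [E, ht]
    obtain ⟨t₀, ht₀⟩ := hc.exists_forall_ge_of_hasCompactSupport hsupp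
    exact ⟨(E t₀)⁻¹, fun t => by linarith [ht₀ t]⟩
  have hupper : ∃ (n : ℕ) (C : ℝ), ∀ x, ‖x‖ ≤ C * (1 + ‖γ x‖) ^ n := by
    refine ⟨1, max 1 M, fun x => ?_⟩
    have hM0 : 0 ≤ max 1 M := by positivity
    have g1 : |x.1| ≤ ‖γ x‖ := by
      have := norm_fst_le (γ x)
      simpa only [γ, norm_neg, Real.norm_eq_abs] using this
    have g2 : E x.1 * |x.2| ≤ ‖γ x‖ := by
      simp [γ, abs_of_pos (Real.exp_pos _), E]
    have hn := norm_nonneg (γ x)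
    rw [pow_one]
    refine max_le ?_ ?_
    · rw [Real.norm_eq_abs]
      nlinarith [le_max_left 1 M]
    · rw [Real.norm_eq_abs]
      have hEpos : 0 < E x.1 := Real.exp_pos _
      calc |x.2| = (E x.1)⁻¹ * (E x.1 * |x.2|) := by field_simp
        _ ≤ max 1 M * ‖γ x‖ := by
          gcongr
          exact (hM _).trans (le_max_right _ _)
        _ ≤ _ := by gcongr; linarith
  let k : SchwartzMap (ℝ × ℝ) ℂ := SchwartzMap.smulLeftCLM ℂ (fun p : ℝ × ℝ => E p.1)
    ((SchwartzMap.compCLM ℝ hγ hupper h).postcompCLM (Complex.conjCLE : ℂ →L[ℝ] ℂ))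
  refine ⟨k, fun p => ?_⟩
  have hk : k p = (E p.1 : ℂ) * (starRingEnd ℂ) (h (γ p)) := by
    simp only [k]
    rw [SchwartzMap.smulLeftCLM_apply_apply hE1, SchwartzMap.postcompCLM_apply]
    simp
  rw [hk]
  by_cases hp : R < |p.1|
  · rw [hR _ (by simpa [γ] using hp), hR _ (by simpa using hp)]
    simp
  · simp only [γ, E, hb_one _ (not_lt.1 hp), one_mul]

theorem partialInv_involution {lam : ℝ} {h k : SchwartzMap (ℝ × ℝ) ℂ}
    (hk : ∀ p : ℝ × ℝ, k p = Real.exp (lam * p.1) *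
      (starRingEnd ℂ) (h (-p.1, -(Real.exp (lam * p.1) * p.2)))) (p y : ℝ) :
    partialInv k (p, y) = (starRingEnd ℂ) (partialInv h (-p, Real.exp (-lam * p) * y)) := by
  unfold partialInv
  rw [← integral_conj]
  have hs := Measure.integral_comp_mul_left (fun r : ℝ => (starRingEnd ℂ)
    (Complex.exp (Complex.I * (r : ℂ) * ((Real.exp (-lam * p) * y : ℝ) : ℂ)) * h (-p, r)))
    (-Real.exp (lam * p))
  rw [abs_inv, abs_neg, abs_of_pos (Real.exp_pos _), eq_inv_smul_iff₀ (Real.exp_pos _).ne'] at hs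
  rw [← hs, ← integral_smul]
  congr 1 with q
  have he : (Real.exp (lam * p) : ℂ) * Real.exp (-(lam * p)) = 1 := by
    rw [← Complex.ofReal_mul, ← Real.exp_add]
    simp
  rw [hk, map_mul, ← Complex.exp_conj, Complex.real_smul]
  simp only [map_mul, map_neg, Complex.conj_I, Complex.conj_ofReal, Complex.ofReal_mul,
    Complex.ofReal_neg, neg_mul]
  rw [mul_left_comm]
  congr 3
  linear_combination (-Complex.I * q * y) * he

theorem sinv_synthesis {lam : ℝ} {h k : SchwartzMap (ℝ × ℝ) ℂ}
    (hk : ∀ p : ℝ × ℝ, k p = Real.exp (lam * p.1) *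
      (starRingEnd ℂ) (h (-p.1, -(Real.exp (lam * p.1) * p.2)))) :
    sinv lam (synthesis h) = synthesis k := by
  funext x
  rw [synthesis_eq_integral_partialInv]
  unfold sinv
  simp only [F0_conj, F0_synthesis, partialInv_involution hk]

/-- Fubini's theorem for twisted products of an element of the algebra with a decaying function. -/
theorem integral_twisted_product (h : SchwartzMap (ℝ × ℝ) ℂ) {R : ℝ}
    (hR : ∀ p : ℝ × ℝ, R < |p.1| → h p = 0) {g : ℝ × ℝ → ℂ} (hg : Continuous g) {C : ℝ}
    (hC : 0 ≤ C) (hgb : ∀ x, ‖g x‖ ≤ C * planeWeight x) {φ : ℝ → ℝ} (hφ : Continuous φ) :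
    ∫ x : ℝ × ℝ, (2 * Real.pi)⁻¹ • ∫ p : ℝ, Complex.exp (Complex.I * (p : ℂ) * (x.1 : ℂ)) *
        partialInv h (p, x.2) * g (x.1, φ p * x.2) =
      (2 * Real.pi)⁻¹ • ∫ p : ℝ, ∫ y : ℝ, partialInv h (p, y) * F0 g (-p, φ p * y) := by
  have hH := continuous_partialInv h
  obtain ⟨D, hD, hHb⟩ := exists_norm_partialInv_le_snd h
  let T : (ℝ × ℝ) × ℝ → ℂ := fun z => Complex.exp (Complex.I * (z.2 : ℂ) * (z.1.1 : ℂ)) *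
    partialInv h (z.2, z.1.2) * g (z.1.1, φ z.2 * z.1.2)
  have hT : Integrable T (volume.prod volume) := by
    have hTc : Continuous T := by fun_prop
    have hind : Integrable ((Set.Icc (-R) R).indicator fun _ : ℝ => D * C) :=
      (integrable_indicator_iff measurableSet_Icc).2
        (continuousOn_const.integrableOn_compact isCompact_Icc)
    refine (integrable_planeWeight.mul_prod hind).mono' hTc.aestronglyMeasurable
      (.of_forall fun z => ?_)
    simp only [T]
    rw [mul_assoc, norm_exp_I_mul_mul, norm_mul]
    by_cases hz : z.2 ∈ Set.Icc (-R) R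
    · rw [Set.indicator_of_mem hz]
      have h2 : ‖g (z.1.1, φ z.2 * z.1.2)‖ ≤ C * (1 + z.1.1 ^ 2)⁻¹ :=
        (hgb _).trans (mul_le_mul_of_nonneg_left
          (mul_le_of_le_one_right (by positivity) (inv_one_add_sq_le_one _)) hC)
      refine (mul_le_mul (hHb (z.2, z.1.2)) h2 (norm_nonneg _) (by positivity)).trans_eq ?_
      simp only [planeWeight]
      ring
    · have : partialInv h (z.2, z.1.2) = 0 := by
        unfold partialInv
        have hz' : R < |z.2| := by
          rw [Set.mem_Icc, ← abs_le] at hz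
          exact not_le.1 hz
        simp [hR (z.2, _) hz']
      simp [this, Set.indicator_of_notMem hz]
  rw [integral_smul]
  congr 1
  change ∫ x : ℝ × ℝ, ∫ p : ℝ, T (x, p) = _
  rw [integral_integral_swap (f := fun x p => T (x, p)) hT]
  refine integral_congr_ae ?_
  filter_upwards [hT.prod_left_ae] with p hp
  rw [Measure.volume_eq_prod] at hp ⊢
  rw [integral_prod_symm _ hp]
  congr 1 with y
  unfold F0
  rw [← integral_const_mul]
  congr 1 with t
  simp only [T, Complex.ofReal_neg, neg_mul_neg]
  ring

theorem omegaW_sprod_sinv_synthesis (lam : ℝ) (h j : SchwartzMap (ℝ × ℝ) ℂ) {R S : ℝ}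
    (hR : ∀ p : ℝ × ℝ, R < |p.1| → h p = 0) (hS : ∀ p : ℝ × ℝ, S < |p.1| → j p = 0) :
    omegaW (sprod lam (synthesis h) (sinv lam (synthesis j))) =
      ∫ x : ℝ × ℝ, synthesis h x * (starRingEnd ℂ) (synthesis j x) := by
  obtain ⟨k, hk⟩ := exists_schwartz_involution lam j hS
  obtain ⟨C, hC, hCb⟩ := exists_norm_synthesis_le k
  obtain ⟨D, hD, hDb⟩ := exists_norm_synthesis_le j
  have hright := integral_twisted_product h hR (g := fun x => (starRingEnd ℂ) (synthesis j x))
    (Complex.continuous_conj.comp (continuous_synthesis j)) hD (by simpa using hDb)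
    (φ := fun _ => 1) continuous_const
  have hleft := integral_twisted_product h hR (continuous_synthesis k) hC hCb
    (φ := fun p => Real.exp (-lam * p)) (by fun_prop)
  rw [sinv_synthesis hk]
  unfold omegaW sprod
  rw [F0_synthesis, hleft]
  simp only [one_mul, F0_conj, F0_synthesis, neg_neg] at hright
  simp only [synthesis_eq_integral_partialInv h, smul_mul_assoc, ← integral_mul_const]
  rw [hright, F0_synthesis]
  congr 2 with p
  congr 1 with y
  rw [partialInv_involution hk, neg_neg, ← mul_assoc, ← Real.exp_add]
  simp

theorem InA.exists_eq_synthesis {f : ℝ × ℝ → ℂ} (hf : InA f) :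
    ∃ (h : SchwartzMap (ℝ × ℝ) ℂ) (R : ℝ), (∀ p : ℝ × ℝ, R < |p.1| → h p = 0) ∧
      f = synthesis h := by
  obtain ⟨h, ⟨R, hR⟩, hf⟩ := hf
  exact ⟨h, R, hR, funext hf⟩

theorem sinv_zero (lam : ℝ) : sinv lam 0 = 0 := by
  funext x
  simp [sinv, F0]

/-- ω(f ⋆ g*) = ∫ f(x) conj(g)(x) d²x for f, g ∈ 𝒜; in particular
(f,g) ↦ ω(f* ⋆ g) is a positive-definite inner product on 𝒜. -/
theorem stmt8 (lam : ℝ) (hlam : 0 < lam) :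
    (∀ f g : ℝ × ℝ → ℂ, InA f → InA g →
      omegaW (sprod lam f (sinv lam g))
        = ∫ x : ℝ × ℝ, f x * (starRingEnd ℂ) (g x)) ∧
    (∀ f : ℝ × ℝ → ℂ, InA f →
      (omegaW (sprod lam (sinv lam f) f)).im = 0 ∧
      0 ≤ (omegaW (sprod lam (sinv lam f) f)).re ∧
      (f ≠ 0 → 0 < (omegaW (sprod lam (sinv lam f) f)).re)) := by
  refine ⟨fun f g hf hg => ?_, fun f hf => ?_⟩
  · obtain ⟨h, R, hR, rfl⟩ := hf.exists_eq_synthesis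
    obtain ⟨j, S, hS, rfl⟩ := hg.exists_eq_synthesis
    exact omegaW_sprod_sinv_synthesis lam h j hR hS
  · obtain ⟨h, R, hR, rfl⟩ := hf.exists_eq_synthesis
    obtain ⟨k, hk⟩ := exists_schwartz_involution lam h hR
    have hkR : ∀ p : ℝ × ℝ, R < |p.1| → k p = 0 := fun p hp => by
      rw [hk, hR _ (by simpa using hp)]
      simp
    have hh : ∀ p : ℝ × ℝ, h p = Real.exp (lam * p.1) *
        (starRingEnd ℂ) (k (-p.1, -(Real.exp (lam * p.1) * p.2))) := fun p => by
      have he : Real.exp (lam * p.1) * Real.exp (-(lam * p.1)) = 1 := by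
        rw [← Real.exp_add]
        simp
      have he' : Real.exp (-(lam * p.1)) * (Real.exp (lam * p.1) * p.2) = p.2 := by
        linear_combination p.2 * he
      rw [hk]
      simp only [map_mul, Complex.conj_conj, Complex.conj_ofReal, neg_neg, mul_neg, he']
      rw [← mul_assoc, ← Complex.ofReal_mul, he]
      simp
    have hinv : sinv lam (synthesis k) = synthesis h := sinv_synthesis hh
    have hval : omegaW (sprod lam (sinv lam (synthesis h)) (synthesis h)) =
        ((∫ x : ℝ × ℝ, ‖synthesis k x‖ ^ 2 : ℝ) : ℂ) := by
      rw [sinv_synthesis hk, ← hinv, omegaW_sprod_sinv_synthesis lam k k hkR hkR,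
        ← integral_complex_ofReal]
      simp only [Complex.mul_conj', Complex.ofReal_pow]
    rw [hval, Complex.ofReal_im, Complex.ofReal_re]
    refine ⟨rfl, integral_nonneg fun x => by positivity, fun hne => ?_⟩
    have hc := continuous_synthesis k
    obtain ⟨C, hC, hb⟩ := exists_norm_synthesis_le k
    have hint : Integrable fun x => ‖synthesis k x‖ ^ 2 := by
      refine (integrable_planeWeight.const_mul (C ^ 2)).mono'
        (Continuous.aestronglyMeasurable (by fun_prop)) (.of_forall fun x => ?_)
      have hw : planeWeight x ≤ 1 :=
        mul_le_one₀ (inv_one_add_sq_le_one _) (by positivity) (inv_one_add_sq_le_one _)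
      have hw0 := planeWeight_nonneg x
      rw [Real.norm_of_nonneg (by positivity)]
      calc ‖synthesis k x‖ ^ 2 ≤ (C * planeWeight x) ^ 2 := by
            gcongr
            exact hb x
        _ = C ^ 2 * (planeWeight x * planeWeight x) := by ring
        _ ≤ C ^ 2 * planeWeight x := by
            gcongr
            exact mul_le_of_le_one_left hw0 hw
    rw [integral_pos_iff_support_of_nonneg (fun x => by positivity) hint]
    refine IsOpen.measure_pos _ (Continuous.isOpen_support (by fun_prop)) ?_
    rw [Function.support_nonempty_iff]
    intro hzero
    refine hne ?_
    have : synthesis k = 0 := funext fun x => by simpa using congrFun hzero x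
    rw [← hinv, this, sinv_zero]
end

section
/- The weight ω satisfies the KMS condition at inverse temperature β = 1 with respect to the automorphism group σ_t(f)(x) = f(x₀ - λt, x₁): for f,g ∈ 𝒜 the function F(z) = ω(f ⋆ σ_z(g)) is entire (via the analytic extension of σ), bounded on the strip 0 ≤ Im z ≤ 1, and satisfies F(t+i) = ω(σ_t(g) ⋆ f) for all t ∈ ℝ. -/
open MeasureTheory Complex

/-- The translation action σ_t(f)(x) = f(x₀ - λt, x₁). -/
def sigmaT (lam t : ℝ) (f : ℝ × ℝ → ℂ) : ℝ × ℝ → ℂ :=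
  fun x => f (x.1 - lam * t, x.2)

open scoped FourierTransform

/-- The normalised inverse Fourier transform on `ℝ × ℝ` used in the definition of `InA`. -/
noncomputable def invFT (h : ℝ × ℝ → ℂ) (x : ℝ × ℝ) : ℂ :=
  (2 * Real.pi)⁻¹ • ∫ p : ℝ × ℝ,
    Complex.exp (Complex.I * ((p.1 : ℂ) * (x.1 : ℂ) + (p.2 : ℂ) * (x.2 : ℂ))) * h p

/-- The (unnormalised) inverse Fourier transform in the second variable. -/
noncomputable def invFT₂ (h : ℝ × ℝ → ℂ) (p : ℝ × ℝ) : ℂ :=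
  ∫ s : ℝ, Complex.exp (Complex.I * ((s : ℂ) * (p.2 : ℂ))) * h (p.1, s)

lemma exists_decay_bound (s : SchwartzMap (ℝ × ℝ) ℂ) :
    ∃ C : ℝ, ∀ x : ℝ × ℝ, ‖s x‖ ≤ C * ((1 + x.1 ^ 2)⁻¹ * (1 + x.2 ^ 2)⁻¹) := by
  refine ⟨2 ^ 4 * (Finset.Iic ((4, 0) : ℕ × ℕ)).sup
    (fun m => SchwartzMap.seminorm ℝ m.1 m.2) s, fun x => ?_⟩
  have h := SchwartzMap.one_add_le_sup_seminorm_apply (𝕜 := ℝ) (m := (4, 0)) (k := 4) (n := 0)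
    le_rfl le_rfl s x
  rw [norm_iteratedFDeriv_zero] at h
  have hsq : ∀ a : ℝ, |a| ≤ ‖x‖ → 1 + a ^ 2 ≤ (1 + ‖x‖) ^ 2 := fun a ha => by
    nlinarith [abs_nonneg a, sq_abs a, norm_nonneg x]
  have h1 := hsq x.1 (norm_fst_le x)
  have h2 := hsq x.2 (norm_snd_le x)
  rw [← mul_inv, ← div_eq_mul_inv, le_div_iff₀ (by positivity), mul_comm]
  refine le_trans ?_ h
  gcongr
  calc (1 + x.1 ^ 2) * (1 + x.2 ^ 2) ≤ (1 + ‖x‖) ^ 2 * (1 + ‖x‖) ^ 2 := by gcongr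
    _ = (1 + ‖x‖) ^ 4 := by ring

lemma norm_exp_I_mul_ofReal_mul (a b : ℝ) :
    ‖Complex.exp (Complex.I * ((a : ℂ) * (b : ℂ)))‖ = 1 := by
  rw [← Complex.ofReal_mul, Complex.norm_exp_I_mul_ofReal]

/-- The inverse Fourier transform of a Schwartz function is a Schwartz function. -/
lemma exists_schwartz_eq_invFT (h : SchwartzMap (ℝ × ℝ) ℂ) :
    ∃ s : SchwartzMap (ℝ × ℝ) ℂ, ⇑s = invFT h := by
  let e : WithLp 2 (ℝ × ℝ) ≃L[ℝ] ℝ × ℝ := WithLp.prodContinuousLinearEquiv 2 ℝ ℝ ℝ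
  let c : ℝ := (2 * Real.pi)⁻¹
  have hc : c ≠ 0 := by positivity
  let d : (ℝ × ℝ) ≃L[ℝ] ℝ × ℝ := ContinuousLinearEquiv.smulLeft (Units.mk0 c hc)
  let φ : SchwartzMap (WithLp 2 (ℝ × ℝ)) ℂ :=
    SchwartzMap.compCLMOfContinuousLinearEquiv ℝ e h
  refine ⟨c • SchwartzMap.compCLMOfContinuousLinearEquiv ℝ (d.trans e.symm) (𝓕⁻ φ), ?_⟩
  ext x
  rw [smul_apply, SchwartzMap.compCLMOfContinuousLinearEquiv_apply,
    SchwartzMap.fourierInv_coe, Function.comp_apply, Real.fourierInv_eq', invFT]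
  congr 1
  rw [← (WithLp.volume_preserving_toLp ℝ ℝ).integral_comp
    (MeasurableEquiv.toLp 2 (ℝ × ℝ)).measurableEmbedding]
  refine integral_congr_ae (Filter.Eventually.of_forall fun p => ?_)
  have hin : 2 * Real.pi * inner ℝ (WithLp.toLp 2 p) ((d.trans e.symm) x)
      = p.1 * x.1 + p.2 * x.2 := by
    have : (d.trans e.symm) x = WithLp.toLp 2 (c * x.1, c * x.2) := rfl
    rw [this, WithLp.prod_inner_apply]
    simp only [c, RCLike.inner_apply, conj_trivial]
    field_simp
  have hφ : φ (WithLp.toLp 2 p) = h p := rfl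
  simp only [hin, smul_eq_mul, hφ]
  congr 2
  push_cast
  ring

section F0

variable (s : SchwartzMap (ℝ × ℝ) ℂ)

lemma norm_exp_neg_I_mul (a b : ℝ) :
    ‖Complex.exp (-Complex.I * (a : ℂ) * (b : ℂ))‖ = 1 := by
  have : -Complex.I * (a : ℂ) * (b : ℂ) = Complex.I * (((-a : ℝ) : ℂ) * (b : ℂ)) := by
    push_cast; ring
  rw [this, norm_exp_I_mul_ofReal_mul]

lemma exists_F0_bound :
    ∃ C : ℝ, ∀ x : ℝ × ℝ, ‖F0 s x‖ ≤ C * (1 + x.2 ^ 2)⁻¹ := by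
  obtain ⟨C, hC⟩ := exists_decay_bound s
  refine ⟨C * ∫ y : ℝ, (1 + y ^ 2)⁻¹, fun x => ?_⟩
  calc ‖F0 s x‖ ≤ ∫ y : ℝ, C * (1 + x.2 ^ 2)⁻¹ * (1 + y ^ 2)⁻¹ := by
        refine norm_integral_le_of_norm_le (integrable_inv_one_add_sq.const_mul _)
          (Filter.Eventually.of_forall fun y => ?_)
        rw [norm_mul, norm_exp_neg_I_mul, one_mul]
        exact (hC (y, x.2)).trans_eq (by ring)
    _ = C * (∫ y : ℝ, (1 + y ^ 2)⁻¹) * (1 + x.2 ^ 2)⁻¹ := by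
        rw [integral_const_mul]; ring

lemma continuous_F0 : Continuous (F0 s) := by
  obtain ⟨C, hC⟩ := exists_decay_bound s
  have hC0 : 0 ≤ C := by simpa using (norm_nonneg _).trans (hC 0)
  refine continuous_of_dominated (bound := fun y => C * (1 + y ^ 2)⁻¹) (fun x => ?_) (fun x => ?_)
    (integrable_inv_one_add_sq.const_mul C) ?_
  · exact Continuous.aestronglyMeasurable (by fun_prop)
  · refine Filter.Eventually.of_forall fun y => ?_
    rw [norm_mul, norm_exp_neg_I_mul, one_mul]
    refine (hC (y, x.2)).trans ?_
    gcongr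
    refine mul_le_of_le_one_right (by positivity) (inv_le_one_of_one_le₀ ?_)
    nlinarith [sq_nonneg x.2]
  · exact Filter.Eventually.of_forall fun y => by fun_prop

lemma integrable_exp_mul_schwartz (y : ℝ) : Integrable
    (fun p : ℝ × ℝ => Complex.exp (Complex.I * ((p.2 : ℂ) * (y : ℂ))) * s p) := by
  refine s.integrable.mono (Continuous.aestronglyMeasurable (by fun_prop))
    (Filter.Eventually.of_forall fun p => ?_)
  rw [norm_mul, norm_exp_I_mul_ofReal_mul, one_mul]

lemma continuous_invFT₂ (y : ℝ) : Continuous fun p : ℝ => invFT₂ s (p, y) := by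
  obtain ⟨C, hC⟩ := exists_decay_bound s
  have hC0 : 0 ≤ C := by simpa using (norm_nonneg _).trans (hC 0)
  refine continuous_of_dominated (bound := fun t => C * (1 + t ^ 2)⁻¹) (fun x => ?_) (fun x => ?_)
    (integrable_inv_one_add_sq.const_mul C) ?_
  · exact Continuous.aestronglyMeasurable (by fun_prop)
  · refine Filter.Eventually.of_forall fun t => ?_
    rw [norm_mul, norm_exp_I_mul_ofReal_mul, one_mul]
    refine (hC (x, t)).trans ?_
    gcongr
    refine mul_le_of_le_one_left (by positivity) (inv_le_one_of_one_le₀ ?_)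
    nlinarith [sq_nonneg x]
  · exact Filter.Eventually.of_forall fun t => by fun_prop

lemma invFT_eq_fourierInv (x : ℝ × ℝ) :
    invFT s x = (2 * Real.pi)⁻¹ •
      𝓕⁻ (fun p : ℝ => invFT₂ s (p, x.2)) ((2 * Real.pi)⁻¹ * x.1) := by
  have hint : Integrable (fun p : ℝ × ℝ =>
      Complex.exp (Complex.I * ((p.1 : ℂ) * (x.1 : ℂ) + (p.2 : ℂ) * (x.2 : ℂ))) * s p) := by
    refine s.integrable.mono (Continuous.aestronglyMeasurable (by fun_prop))
      (Filter.Eventually.of_forall fun p => ?_)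
    rw [norm_mul, mul_add, Complex.exp_add, norm_mul, norm_exp_I_mul_ofReal_mul,
      norm_exp_I_mul_ofReal_mul, one_mul, one_mul]
  rw [invFT, Real.fourierInv_eq', Measure.volume_eq_prod, integral_prod _ hint]
  congr 1
  refine integral_congr_ae (Filter.Eventually.of_forall fun p => ?_)
  simp only [invFT₂, smul_eq_mul]
  rw [← integral_const_mul]
  refine integral_congr_ae (Filter.Eventually.of_forall fun t => ?_)
  have hin : 2 * Real.pi * inner ℝ p ((2 * Real.pi)⁻¹ * x.1) = p * x.1 := by
    simp only [RCLike.inner_apply, conj_trivial]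
    field_simp
  simp only [hin]
  rw [← mul_assoc, ← Complex.exp_add]
  congr 2
  push_cast
  ring

lemma F0_invFT : F0 (invFT s) = invFT₂ s := by
  ext ⟨q, y⟩
  obtain ⟨S, hS⟩ := exists_schwartz_eq_invFT s
  obtain ⟨C, hC⟩ := exists_decay_bound S
  have hpi : (2 * Real.pi) ≠ 0 := by positivity
  let P : ℝ → ℂ := fun p => invFT₂ s (p, y)
  have hPint : Integrable P := (integrable_exp_mul_schwartz s y).integral_prod_left
  have hval : ∀ w : ℝ, 𝓕⁻ P w = (2 * Real.pi) • S (2 * Real.pi * w, y) := fun w => by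
    rw [hS, invFT_eq_fourierInv, smul_smul, mul_inv_cancel₀ hpi, one_smul, ← mul_assoc,
      inv_mul_cancel₀ hpi, one_mul]
  have hSint : Integrable fun w : ℝ => S (w, y) := by
    refine (integrable_inv_one_add_sq.const_mul (C * (1 + y ^ 2)⁻¹)).mono'
      (Continuous.aestronglyMeasurable (by fun_prop)) (Filter.Eventually.of_forall fun w => ?_)
    exact (hC (w, y)).trans_eq (by ring)
  have hinv : Integrable (𝓕⁻ P) := by
    rw [show 𝓕⁻ P = fun w : ℝ => (2 * Real.pi) • S (2 * Real.pi * w, y) from funext hval]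
    exact (hSint.comp_mul_left' hpi).smul (2 * Real.pi)
  have hfour : Integrable (𝓕 P) := by
    have : 𝓕 P = fun w => 𝓕⁻ P (-w) := by
      ext w; rw [Real.fourierInv_eq_fourier_neg, neg_neg]
    rw [this]; exact hinv.comp_neg
  have key := congrFun ((continuous_invFT₂ s y).fourier_fourierInv_eq hPint hfour) q
  rw [Real.fourier_eq'] at key
  rw [← key, F0]
  have := Measure.integral_comp_mul_left
    (fun u : ℝ => Complex.exp (-Complex.I * (q : ℂ) * (u : ℂ)) * invFT s (u, y)) (2 * Real.pi)
  rw [abs_of_pos (by positivity), eq_comm, inv_smul_eq_iff₀ hpi] at this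
  rw [this, ← integral_smul]
  refine integral_congr_ae (Filter.Eventually.of_forall fun w => ?_)
  have hw : 𝓕⁻ (fun p => invFT₂ s (p, y)) w = _ := hval w
  simp only [hw, hS, smul_eq_mul, RCLike.inner_apply, conj_trivial, real_smul]
  rw [mul_left_comm]
  congr 2
  push_cast
  ring

end F0

section StarProduct

variable (lam : ℝ) (f k : SchwartzMap (ℝ × ℝ) ℂ) {R : ℝ}

/-- The integrand of `ω (f ⋆ k)` in the variables `((p₀, x₁), x₀)` is integrable. -/
lemma integrable_star_integrand (hf : ∀ p : ℝ × ℝ, R < |p.1| → F0 f p = 0) :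
    Integrable fun q : (ℝ × ℝ) × ℝ => Complex.exp (Complex.I * (q.1.1 : ℂ) * (q.2 : ℂ))
      * F0 f q.1 * k (q.2, Real.exp (-lam * q.1.1) * q.1.2) := by
  obtain ⟨C, hC⟩ := exists_F0_bound f
  obtain ⟨D, hD⟩ := exists_decay_bound k
  have hC0 : 0 ≤ C := by simpa using (norm_nonneg _).trans (hC 0)
  have hD0 : 0 ≤ D := by simpa using (norm_nonneg _).trans (hD 0)
  have hind : Integrable ((Set.Icc (-R) R).indicator fun _ : ℝ => (1 : ℝ)) :=
    (integrable_indicator_iff measurableSet_Icc).2 (integrableOn_const (by simp))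
  have hbound := (hind.mul_prod (integrable_inv_one_add_sq.const_mul C)).mul_prod
    (integrable_inv_one_add_sq.const_mul D)
  have hcont := continuous_F0 f
  refine hbound.mono' (Continuous.aestronglyMeasurable (by fun_prop))
    (Filter.Eventually.of_forall fun q => ?_)
  rw [norm_mul, norm_mul, mul_assoc Complex.I, norm_exp_I_mul_ofReal_mul, one_mul]
  refine mul_le_mul ?_ ((hD _).trans ?_) (norm_nonneg _) ?_
  · by_cases hq : R < |q.1.1|
    · rw [hf _ hq, norm_zero]
      exact mul_nonneg (Set.indicator_nonneg (fun _ _ => zero_le_one) _) (by positivity)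
    · rw [Set.indicator_of_mem (Set.mem_Icc.2 (abs_le.1 (not_lt.1 hq))), one_mul]
      exact hC _
  · refine mul_le_mul_of_nonneg_left (mul_le_of_le_one_right (by positivity) ?_) hD0
    exact inv_le_one_of_one_le₀ (le_add_of_nonneg_right (sq_nonneg _))
  · exact mul_nonneg (Set.indicator_nonneg (fun _ _ => zero_le_one) _) (by positivity)

lemma integral_star_integrand (p : ℝ × ℝ) :
    ∫ x : ℝ, Complex.exp (Complex.I * (p.1 : ℂ) * (x : ℂ))
      * F0 f p * k (x, Real.exp (-lam * p.1) * p.2)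
      = F0 f p * F0 k (-p.1, Real.exp (-lam * p.1) * p.2) := by
  rw [F0.eq_def k, ← integral_const_mul]
  refine integral_congr_ae (Filter.Eventually.of_forall fun x => ?_)
  simp only [Complex.ofReal_neg, neg_mul_neg]
  ring

lemma integrable_F0_mul_F0 (hf : ∀ p : ℝ × ℝ, R < |p.1| → F0 f p = 0) :
    Integrable fun p : ℝ × ℝ => F0 f p * F0 k (-p.1, Real.exp (-lam * p.1) * p.2) := by
  simpa only [integral_star_integrand] using
    (integrable_star_integrand lam f k hf).integral_prod_left

lemma omegaW_sprod (hf : ∀ p : ℝ × ℝ, R < |p.1| → F0 f p = 0) :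
    omegaW (sprod lam f k) = (2 * Real.pi)⁻¹ •
      ∫ p : ℝ × ℝ, F0 f p * F0 k (-p.1, Real.exp (-lam * p.1) * p.2) := by
  let Ψ : (ℝ × ℝ) × ℝ → ℂ := fun q => Complex.exp (Complex.I * (q.1.1 : ℂ) * (q.2 : ℂ))
      * F0 f q.1 * k (q.2, Real.exp (-lam * q.1.1) * q.1.2)
  have hΨ : Integrable Ψ := integrable_star_integrand lam f k hf
  let e : (ℝ × ℝ) × ℝ ≃ᵐ (ℝ × ℝ) × ℝ :=
    (MeasurableEquiv.prodComm.trans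
      ((MeasurableEquiv.refl ℝ).prodCongr MeasurableEquiv.prodComm)).trans
      MeasurableEquiv.prodAssoc.symm
  have he : MeasurePreserving e volume volume := by
    refine MeasurePreserving.trans (MeasurePreserving.trans Measure.measurePreserving_swap
      ((MeasurePreserving.id volume).prod Measure.measurePreserving_swap)) ?_
    exact volume_preserving_prodAssoc.symm
  have heΨ : Integrable fun q : (ℝ × ℝ) × ℝ => Ψ (e q) := he.integrable_comp_of_integrable hΨ
  simp only [omegaW, sprod]
  rw [integral_smul]
  congr 1
  calc ∫ x : ℝ × ℝ, ∫ p : ℝ, Ψ (e (x, p)) = ∫ q, Ψ (e q) := (integral_prod _ heΨ).symm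
    _ = ∫ q, Ψ q := he.integral_comp' Ψ
    _ = ∫ p : ℝ × ℝ, ∫ x : ℝ, Ψ (p, x) := integral_prod _ hΨ
    _ = _ := integral_congr_ae
      (Filter.Eventually.of_forall fun p => integral_star_integrand lam f k p)

end StarProduct

/-- The change of variables `(p, y) ↦ (-p, e^{-λp} y)` behind the KMS condition. -/
lemma integral_exp_mul_twist (lam : ℝ) {A B : ℝ × ℝ → ℂ}
    (h₁ : Integrable fun p : ℝ × ℝ =>
      Real.exp (-lam * p.1) • (A p * B (-p.1, Real.exp (-lam * p.1) * p.2)))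
    (h₂ : Integrable fun p : ℝ × ℝ => B p * A (-p.1, Real.exp (-lam * p.1) * p.2)) :
    ∫ p : ℝ × ℝ, Real.exp (-lam * p.1) • (A p * B (-p.1, Real.exp (-lam * p.1) * p.2))
      = ∫ p : ℝ × ℝ, B p * A (-p.1, Real.exp (-lam * p.1) * p.2) := by
  rw [Measure.volume_eq_prod] at *
  rw [integral_prod _ h₁, integral_prod _ h₂, ← integral_neg_eq_self]
  refine integral_congr_ae (Filter.Eventually.of_forall fun p => ?_)
  have h := Measure.integral_comp_mul_left
    (fun y : ℝ => B (p, y) * A (-p, Real.exp (-lam * p) * y)) (Real.exp (lam * p))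
  rw [abs_of_pos (by positivity), eq_comm, inv_smul_eq_iff₀ (by positivity), ← integral_smul] at h
  refine Eq.trans ?_ h.symm
  refine integral_congr_ae (Filter.Eventually.of_forall fun y => ?_)
  have hexp : Real.exp (-lam * p) * (Real.exp (lam * p) * y) = y := by
    rw [← mul_assoc, ← Real.exp_add]; simp
  simp only [neg_neg, neg_mul_neg, hexp]
  rw [mul_comm (A _)]

section Entire

variable {K : ℝ × ℝ → ℂ} {R : ℝ}

lemma norm_exp_I_mul_le (p : ℝ) (hp : |p| ≤ R) (w : ℂ) :
    ‖Complex.exp (Complex.I * (p : ℂ) * w)‖ ≤ Real.exp (R * |w.im|) := by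
  rw [Complex.norm_exp]
  refine Real.exp_le_exp.2 ?_
  have : (Complex.I * (p : ℂ) * w).re = -(p * w.im) := by simp
  rw [this]
  calc -(p * w.im) ≤ |p * w.im| := neg_le_abs _
    _ = |p| * |w.im| := abs_mul _ _
    _ ≤ R * |w.im| := by gcongr

lemma norm_exp_I_mul_mul_le (hK0 : ∀ p : ℝ × ℝ, R < |p.1| → K p = 0) (w : ℂ) (p : ℝ × ℝ) :
    ‖Complex.exp (Complex.I * (p.1 : ℂ) * w) * K p‖ ≤ Real.exp (R * |w.im|) * ‖K p‖ := by
  by_cases hp : R < |p.1|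
  · simp [hK0 p hp]
  · rw [norm_mul]
    gcongr
    exact norm_exp_I_mul_le _ (not_lt.1 hp) w

lemma norm_integral_exp_I_mul_le (hK : Integrable K) (hK0 : ∀ p : ℝ × ℝ, R < |p.1| → K p = 0)
    (w : ℂ) : ‖∫ p : ℝ × ℝ, Complex.exp (Complex.I * (p.1 : ℂ) * w) * K p‖
      ≤ Real.exp (R * |w.im|) * ∫ p : ℝ × ℝ, ‖K p‖ := by
  rw [← integral_const_mul]
  exact norm_integral_le_of_norm_le (hK.norm.const_mul _)
    (Filter.Eventually.of_forall (norm_exp_I_mul_mul_le hK0 w))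

/-- The Fourier–Laplace transform of an integrable function with compact support in the
first variable is entire (Paley–Wiener). -/
lemma differentiable_integral_exp_I_mul (hK : Integrable K)
    (hK0 : ∀ p : ℝ × ℝ, R < |p.1| → K p = 0) :
    Differentiable ℂ fun w : ℂ => ∫ p : ℝ × ℝ, Complex.exp (Complex.I * (p.1 : ℂ) * w) * K p := by
  intro w₀
  have hmeas : ∀ w : ℂ, AEStronglyMeasurable
      (fun p : ℝ × ℝ => Complex.exp (Complex.I * (p.1 : ℂ) * w) * K p) := fun w =>
    (Continuous.aestronglyMeasurable (by fun_prop)).mul hK.aestronglyMeasurable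
  refine (hasDerivAt_integral_of_dominated_loc_of_deriv_le
    (F' := fun w p => Complex.I * (p.1 : ℂ) * (Complex.exp (Complex.I * (p.1 : ℂ) * w) * K p))
    (bound := fun p => R * Real.exp (R * (‖w₀‖ + 1)) * ‖K p‖)
    (Metric.ball_mem_nhds w₀ one_pos) (Filter.Eventually.of_forall hmeas)
    ?_ ?_ ?_ ?_ ?_).2.differentiableAt
  · exact (hK.norm.const_mul _).mono' (hmeas w₀)
      (Filter.Eventually.of_forall (norm_exp_I_mul_mul_le hK0 w₀))
  · exact (Continuous.aestronglyMeasurable (by fun_prop)).mul (hmeas w₀)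
  · refine Filter.Eventually.of_forall fun p w hw => ?_
    by_cases hp : R < |p.1|
    · simp [hK0 p hp]
    · have hR : 0 ≤ R := (abs_nonneg _).trans (not_lt.1 hp)
      have him : |w.im| ≤ ‖w₀‖ + 1 := by
        have h1 := Complex.abs_im_le_norm w
        have h2 := norm_sub_norm_le w w₀
        rw [mem_ball_iff_norm] at hw
        linarith
      rw [norm_mul, mul_assoc R]
      refine mul_le_mul ?_ ((norm_exp_I_mul_mul_le hK0 w p).trans ?_) (norm_nonneg _) hR
      · simpa using hp
      · gcongr
  · exact hK.norm.const_mul _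
  · refine Filter.Eventually.of_forall fun p w _ => ?_
    have := (((hasDerivAt_id w).const_mul (Complex.I * (p.1 : ℂ))).cexp).mul_const (K p)
    convert! this using 1
    simp only [id, mul_one]
    ring

end Entire

section Translation

variable {h : SchwartzMap (ℝ × ℝ) ℂ} {R : ℝ}

/-- Multiplying by `e^{i p₀ w}` preserves Schwartz functions with compact support in `p₀`. -/
lemma exists_schwartz_eq_exp_mul (hR : ∀ p : ℝ × ℝ, R < |p.1| → h p = 0) (w : ℂ) :
    ∃ s : SchwartzMap (ℝ × ℝ) ℂ, ∀ p : ℝ × ℝ,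
      s p = Complex.exp (Complex.I * (p.1 : ℂ) * w) * h p := by
  let χ : ContDiffBump (0 : ℝ) := ⟨|R| + 1, |R| + 2, by positivity, by linarith⟩
  let u : ℝ → ℂ := fun t => (χ t : ℂ) * Complex.exp (Complex.I * (t : ℂ) * w)
  have hcs : HasCompactSupport u := by
    refine HasCompactSupport.mul_right ?_
    exact χ.hasCompactSupport.comp_left (g := ((↑) : ℝ → ℂ)) Complex.ofReal_zero
  have hsm : ContDiff ℝ (⊤ : ℕ∞) u := by
    have h1 : ContDiff ℝ (⊤ : ℕ∞) fun t : ℝ => (t : ℂ) := Complex.ofRealCLM.contDiff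
    have h2 : ContDiff ℝ (⊤ : ℕ∞) fun t : ℝ => (χ t : ℂ) := h1.comp χ.contDiff
    exact h2.mul ((contDiff_const.mul h1).mul contDiff_const).cexp
  have hu : Function.HasTemperateGrowth fun p : ℝ × ℝ => u p.1 :=
    (hcs.hasTemperateGrowth hsm).comp (ContinuousLinearMap.fst ℝ ℝ ℝ).hasTemperateGrowth
  refine ⟨SchwartzMap.smulLeftCLM ℂ (fun p : ℝ × ℝ => u p.1) h, fun p => ?_⟩
  rw [SchwartzMap.smulLeftCLM_apply_apply hu, smul_eq_mul]
  by_cases hp : R < |p.1|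
  · simp [hR p hp]
  · have : χ p.1 = 1 := by
      refine χ.one_of_mem_closedBall ?_
      rw [mem_closedBall_zero_iff, Real.norm_eq_abs]
      exact (not_lt.1 hp).trans ((le_abs_self R).trans (le_add_of_nonneg_right zero_le_one))
    simp [u, this]

lemma invFT₂_eq_zero (hR : ∀ p : ℝ × ℝ, R < |p.1| → h p = 0) (p : ℝ × ℝ) (hp : R < |p.1|) :
    invFT₂ h p = 0 := by
  simp [invFT₂, fun t : ℝ => hR (p.1, t) hp]

/-- The entire extension of `invFT h` in the first variable is the Fourier–Laplace transform. -/
lemma entire_extension_eq (hR : ∀ p : ℝ × ℝ, R < |p.1| → h p = 0) {φ : ℂ → ℂ} (y : ℝ)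
    (hφ : Differentiable ℂ φ) (hext : ∀ x : ℝ, φ x = invFT h (x, y)) (w : ℂ) :
    φ w = (2 * Real.pi)⁻¹ • ∫ p : ℝ × ℝ, Complex.exp (Complex.I * (p.1 : ℂ) * w) *
      (Complex.exp (Complex.I * ((p.2 : ℂ) * (y : ℂ))) * h p) := by
  have hdiff := (differentiable_integral_exp_I_mul (integrable_exp_mul_schwartz h y)
    (R := R) fun p hp => by rw [hR p hp, mul_zero]).const_smul (2 * Real.pi)⁻¹
  refine congrFun (AnalyticOnNhd.eq_of_frequently_eq (z₀ := 0) (f := φ)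
    (fun z _ => hφ.analyticAt z) (fun z _ => hdiff.analyticAt z) ?_) w
  have hreal : ∀ x : ℝ, φ x = (2 * Real.pi)⁻¹ • ∫ p : ℝ × ℝ,
      Complex.exp (Complex.I * (p.1 : ℂ) * (x : ℂ)) *
      (Complex.exp (Complex.I * ((p.2 : ℂ) * (y : ℂ))) * h p) := fun x => by
    rw [hext, invFT]
    congr 1
    refine integral_congr_ae (Filter.Eventually.of_forall fun p => ?_)
    simp only
    rw [← mul_assoc, ← Complex.exp_add]
    congr 2
    ring
  have htend : Filter.Tendsto (fun x : ℝ => (x : ℂ)) (nhdsWithin 0 {0}ᶜ) (nhdsWithin 0 {0}ᶜ) := by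
    refine tendsto_nhdsWithin_iff.2 ⟨?_, ?_⟩
    · exact (Complex.continuous_ofReal.tendsto' 0 0 Complex.ofReal_zero).mono_left nhdsWithin_le_nhds
    · filter_upwards [self_mem_nhdsWithin] with x hx
      simpa using hx
  exact htend.frequently (Filter.Frequently.of_forall hreal)

end Translation

/-- Complex translates in the first variable of an element of `𝒜`, as Schwartz functions whose
partial Fourier transform is modulated by `e^{-ip₀w}`. -/
lemma exists_schwartz_translate {h : SchwartzMap (ℝ × ℝ) ℂ} {R : ℝ}
    (hR : ∀ p : ℝ × ℝ, R < |p.1| → h p = 0) {gC : ℂ → ℝ → ℂ}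
    (hext : ∀ x : ℝ × ℝ, gC (x.1 : ℂ) x.2 = invFT h x)
    (hent : ∀ x1 : ℝ, Differentiable ℂ fun z => gC z x1) (w : ℂ) :
    ∃ S : SchwartzMap (ℝ × ℝ) ℂ, (∀ x : ℝ × ℝ, S x = gC ((x.1 : ℂ) - w) x.2) ∧
      (∀ p : ℝ × ℝ, F0 S p = Complex.exp (Complex.I * (p.1 : ℂ) * -w) * invFT₂ h p) := by
  obtain ⟨s, hs⟩ := exists_schwartz_eq_exp_mul hR (-w)
  obtain ⟨S, hS⟩ := exists_schwartz_eq_invFT s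
  refine ⟨S, fun x => ?_, fun p => ?_⟩
  · rw [hS, invFT, entire_extension_eq hR x.2 (hent x.2) fun t => hext (t, x.2)]
    congr 1
    refine integral_congr_ae (Filter.Eventually.of_forall fun p => ?_)
    simp only [hs]
    rw [← mul_assoc, ← mul_assoc, ← Complex.exp_add, ← Complex.exp_add]
    congr 2
    ring
  · rw [hS, F0_invFT, invFT₂, invFT₂, ← integral_const_mul]
    refine integral_congr_ae (Filter.Eventually.of_forall fun t => ?_)
    simp only [hs]
    ring

/-- The weight ω satisfies the KMS condition at inverse temperature β = 1 with
respect to σ_t: for f, g ∈ 𝒜 (g with entire extension gC in the first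
variable), the function F(z) = ω(f ⋆ σ_z(g)) is entire, bounded on the strip
0 ≤ Im z ≤ 1, and satisfies F(t+i) = ω(σ_t(g) ⋆ f) for all real t. -/
theorem stmt12 (lam : ℝ) (hlam : 0 < lam) (f g : ℝ × ℝ → ℂ)
    (hf : InA f) (hg : InA g)
    (gC : ℂ → ℝ → ℂ)
    (hext : ∀ x : ℝ × ℝ, gC (x.1 : ℂ) x.2 = g x)
    (hent : ∀ x1 : ℝ, Differentiable ℂ fun z => gC z x1) :
    Differentiable ℂ (fun z : ℂ =>
      omegaW (sprod lam f (fun x => gC ((x.1 : ℂ) - lam * z) x.2))) ∧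
    (∃ M : ℝ, ∀ z : ℂ, 0 ≤ z.im → z.im ≤ 1 →
      ‖omegaW (sprod lam f (fun x => gC ((x.1 : ℂ) - lam * z) x.2))‖ ≤ M) ∧
    (∀ t : ℝ,
      omegaW (sprod lam f (fun x => gC ((x.1 : ℂ) - lam * ((t : ℂ) + Complex.I)) x.2))
        = omegaW (sprod lam (sigmaT lam t g) f)) := by
  obtain ⟨hf', ⟨R, hR⟩, hfeq⟩ := hf
  obtain ⟨hg', ⟨R', hR'⟩, hgeq⟩ := hg
  obtain ⟨Sf, hSf⟩ := exists_schwartz_eq_invFT hf'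
  obtain rfl : f = Sf := by rw [hSf]; exact funext hfeq
  have hF0f : ∀ p : ℝ × ℝ, R < |p.1| → F0 Sf p = 0 := by
    rw [hSf, F0_invFT]; exact invFT₂_eq_zero hR
  choose S hS hF0S using exists_schwartz_translate hR'
    (fun x => (hext x).trans (hgeq x)) hent
  have hF0S_zero : ∀ (w : ℂ) (p : ℝ × ℝ), R' < |p.1| → F0 (S w) p = 0 := fun w p hp => by
    rw [hF0S, invFT₂_eq_zero hR' p hp, mul_zero]
  let K : ℝ × ℝ → ℂ := fun p => F0 Sf p * F0 (S 0) (-p.1, Real.exp (-lam * p.1) * p.2)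
  have hK : Integrable K := integrable_F0_mul_F0 lam Sf (S 0) hF0f
  have hK0 : ∀ p : ℝ × ℝ, R < |p.1| → K p = 0 := fun p hp => by simp [K, hF0f p hp]
  have hStar : ∀ z : ℂ, omegaW (sprod lam Sf fun x => gC ((x.1 : ℂ) - lam * z) x.2)
      = (2 * Real.pi)⁻¹ •
        ∫ p : ℝ × ℝ, Complex.exp (Complex.I * (p.1 : ℂ) * (lam * z)) * K p := fun z => by
    rw [← funext (hS (lam * z)), omegaW_sprod lam Sf (S (lam * z)) hF0f]
    congr 1
    refine integral_congr_ae (Filter.Eventually.of_forall fun p => ?_)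
    simp only [K, hF0S, Complex.ofReal_neg, mul_neg, neg_mul, neg_neg, mul_zero, neg_zero,
      Complex.exp_zero, one_mul]
    ring
  refine ⟨?_, ⟨(2 * Real.pi)⁻¹ * (Real.exp (|R| * lam) * ∫ p, ‖K p‖), fun z h0 h1 => ?_⟩,
    fun t => ?_⟩
  · simp only [hStar]
    exact ((differentiable_integral_exp_I_mul hK hK0).comp
      (differentiable_id.const_mul (lam : ℂ))).const_smul (2 * Real.pi)⁻¹
  · rw [hStar, norm_smul, Real.norm_of_nonneg (by positivity)]
    have him : |((lam : ℂ) * z).im| ≤ lam := by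
      rw [Complex.im_ofReal_mul, abs_of_nonneg (by positivity)]
      exact mul_le_of_le_one_right hlam.le h1
    refine mul_le_mul_of_nonneg_left ((norm_integral_exp_I_mul_le hK hK0 _).trans ?_)
      (by positivity)
    gcongr
    exact le_abs_self R
  · have hσ : sigmaT lam t g = S (lam * t) := by
      ext x
      rw [hS, sigmaT, ← hext]
      push_cast
      rfl
    have htwist : ∀ p : ℝ × ℝ,
        F0 Sf p * F0 (S (lam * (t + Complex.I))) (-p.1, Real.exp (-lam * p.1) * p.2)
        = Real.exp (-lam * p.1) •
          (F0 Sf p * F0 (S (lam * t)) (-p.1, Real.exp (-lam * p.1) * p.2)) := fun p => by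
      have hexp : Complex.exp (Complex.I * ((-p.1 : ℝ) : ℂ) * -(lam * (t + Complex.I)))
          = Real.exp (-lam * p.1) *
            Complex.exp (Complex.I * ((-p.1 : ℝ) : ℂ) * -(lam * t)) := by
        rw [Complex.ofReal_exp, ← Complex.exp_add]
        congr 1
        push_cast
        linear_combination (lam * p.1 : ℂ) * Complex.I_sq
      rw [hF0S, hF0S, hexp, Complex.real_smul]
      ring
    have h₁ := integrable_F0_mul_F0 lam Sf (S (lam * (t + Complex.I))) hF0f
    simp only [htwist] at h₁
    rw [← funext (hS (lam * (t + Complex.I))), hσ, omegaW_sprod lam Sf _ hF0f,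
      omegaW_sprod lam (S (lam * t)) Sf (hF0S_zero _)]
    simp only [htwist]
    rw [integral_exp_mul_twist lam h₁
      (integrable_F0_mul_F0 lam (S (lam * t)) Sf (hF0S_zero _))]
end
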